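/- If Γ ⊢ M is derivable, M is constructed from variables and blocks of the form ((…((π_{a₁}∘π_{a₂})∘…)∘π_{a_m})∘π_b)∘b (m ≥ 0) using only application and abstraction, then either M is pure (contains no such block) or one of the reduction rules α₁ (on the term M) or α₂ (on the judgement Γ ⊢ M) is applicable. -/

import Mathlib

/- Named terms and substitutions of the λπ-calculus. Variables are natural numbers. -/
mutual
inductive Tm : Type
  | var : ℕ → Tm
  | app : Tm → Tm → Tm
  | lam : ℕ → Tm → Tm
  | clos : Subst → Tm → Tm
inductive Subst : Type
  | id : Subst
  | pi : ℕ → Subst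
  | cons : Subst → Tm → ℕ → Subst
  | comp : Subst → Subst → Subst
end

/- Contexts are lists of variables; the head of the list is the *rightmost* variable,
so the context `Γ, a` of the paper is `a :: Γ`. -/
mutual
/-- `WfTm Γ M` is the judgement `Γ ⊢ M`. -/
inductive WfTm : List ℕ → Tm → Prop
  | var (Γ : List ℕ) (a : ℕ) : WfTm (a :: Γ) (.var a)
  | weak {Γ : List ℕ} {a : ℕ} (b : ℕ) : a ≠ b → WfTm Γ (.var a) → WfTm (b :: Γ) (.var a)
  | app {Γ M N} : WfTm Γ M → WfTm Γ N → WfTm Γ (.app M N)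
  | lam {Γ a M} : WfTm (a :: Γ) M → WfTm Γ (.lam a M)
  | clos {Γ s Δ M} : WfSub Γ s Δ → WfTm Δ M → WfTm Γ (.clos s M)
/-- `WfSub Γ s Δ` is the judgement `Γ ⊢ s ▷ Δ`. -/
inductive WfSub : List ℕ → Subst → List ℕ → Prop
  | id (Γ) : WfSub Γ .id Γ
  | pi (Γ a) : WfSub (a :: Γ) (.pi a) Γ
  | cons {Γ s Δ N} (a) : WfSub Γ s Δ → WfTm Γ N → WfSub Γ (.cons s N a) (a :: Δ)
  | comp {Γ s Δ q Θ} : WfSub Γ s Δ → WfSub Δ q Θ → WfSub Γ (.comp s q) Θ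
end

/-- The operator `O_{λa}` on sequences of finite sets (sequences are 0-indexed:
index `n` corresponds to the paper's index `n+1`). -/
def Olam (a : ℕ) (A : ℕ → Finset ℕ) : ℕ → Finset ℕ
  | 0 => (A 0).erase a ∪ A 1
  | n + 1 => A (n + 2)

/-- The operator `O_π`. -/
def Opi (A : ℕ → Finset ℕ) : ℕ → Finset ℕ
  | 0 => ∅
  | n + 1 => A n

mutual
/-- The free-variable sequence of a term: `FV M n` is the paper's `FV_{n+1}(M)`. -/
def FV : Tm → ℕ → Finset ℕ
  | .var a => fun n => if n = 0 then {a} else ∅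
  | .app M N => fun n => FV M n ∪ FV N n
  | .lam a M => Olam a (FV M)
  | .clos s M => Osub s (FV M)
/-- The operator `O_s` associated with a substitution `s`. -/
def Osub : Subst → (ℕ → Finset ℕ) → (ℕ → Finset ℕ)
  | .id => fun A => A
  | .pi _ => fun A => Opi A
  | .cons s N a => fun A n => Osub s (Olam a A) n ∪ FV N n
  | .comp s q => fun A => Osub s (Osub q A)
end

/-- Iterated abstraction `λΓ.M` (recall the head of the list is the rightmost variable). -/
def lamCtx : List ℕ → Tm → Tm
  | [], M => M
  | a :: Γ, M => lamCtx Γ (.lam a M)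

/-- Free variables of a judgement: `FV(Γ ⊢ M) = FV(λΓ.M)`. -/
def FVJ (Γ : List ℕ) (M : Tm) : ℕ → Finset ℕ := FV (lamCtx Γ M)

/-- Iterated lifting `⇑_Δ(s)`. -/
def Uparrow : List ℕ → Subst → Subst
  | [], s => s
  | a :: Δ, s => .cons (.comp (.pi a) (Uparrow Δ s)) (.var a) a

/- One-step reduction of the λπ-calculus (compatible closure).  The Boolean
parameter tells whether the rule `Beta` is allowed: `StepTm true` is λπ-reduction,
`StepTm false` is σπα-reduction. -/
mutual
inductive StepTm : Bool → Tm → Tm → Prop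
  | beta {a : ℕ} {M N : Tm} :
      StepTm true (.app (.lam a M) N) (.clos (.cons .id N a) M)
  | abs {β : Bool} {s : Subst} {a : ℕ} {M : Tm} :
      StepTm β (.clos s (.lam a M))
        (.lam a (.clos (.cons (.comp (.pi a) s) (.var a) a) M))
  | app {β : Bool} {s : Subst} {M N : Tm} :
      StepTm β (.clos s (.app M N)) (.app (.clos s M) (.clos s N))
  | consVar {β : Bool} {s : Subst} {N : Tm} {a : ℕ} :
      StepTm β (.clos (.cons s N a) (.var a)) N
  | new {β : Bool} {s : Subst} {N : Tm} {a b : ℕ} : a ≠ b →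
      StepTm β (.clos (.cons s N a) (.var b)) (.clos s (.var b))
  | idVar {β : Bool} {a : ℕ} : StepTm β (.clos .id (.var a)) (.var a)
  | clos {β : Bool} {s q : Subst} {M : Tm} :
      StepTm β (.clos s (.clos q M)) (.clos (.comp s q) M)
  | pi1 {β : Bool} {a b : ℕ} : a ≠ b → StepTm β (.clos (.pi a) (.var b)) (.var b)
  | pi2 {β : Bool} {s : Subst} {a b : ℕ} : a ≠ b →
      StepTm β (.clos (.comp s (.pi a)) (.var b)) (.clos s (.var b))
  | alpha1 {β : Bool} {a b : ℕ} {M : Tm} :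
      (∃ i, a ∈ FV (.lam a M) i) → (∀ i, b ∉ FV (.lam a M) i) →
      StepTm β (.lam a M) (.lam b (.clos (.cons (.pi b) (.var b) a) M))
  | lamCong {β : Bool} {a : ℕ} {M₁ M₂ : Tm} :
      StepTm β M₁ M₂ → StepTm β (.lam a M₁) (.lam a M₂)
  | appL {β : Bool} {M₁ M₂ N : Tm} : StepTm β M₁ M₂ → StepTm β (.app M₁ N) (.app M₂ N)
  | appR {β : Bool} {M N₁ N₂ : Tm} : StepTm β N₁ N₂ → StepTm β (.app M N₁) (.app M N₂)
  | closL {β : Bool} {s₁ s₂ : Subst} {M : Tm} :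
      StepSub β s₁ s₂ → StepTm β (.clos s₁ M) (.clos s₂ M)
  | closR {β : Bool} {s : Subst} {M₁ M₂ : Tm} :
      StepTm β M₁ M₂ → StepTm β (.clos s M₁) (.clos s M₂)
inductive StepSub : Bool → Subst → Subst → Prop
  | ass {β : Bool} {s q r : Subst} :
      StepSub β (.comp s (.comp q r)) (.comp (.comp s q) r)
  | idR {β : Bool} {s : Subst} : StepSub β (.comp s .id) s
  | idShift {β : Bool} {a : ℕ} : StepSub β (.comp .id (.pi a)) (.pi a)
  | consShift {β : Bool} {s : Subst} {N : Tm} {a : ℕ} :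
      StepSub β (.comp (.cons s N a) (.pi a)) s
  | map {β : Bool} {s q : Subst} {N : Tm} {a : ℕ} :
      StepSub β (.comp s (.cons q N a)) (.cons (.comp s q) (.clos s N) a)
  | consL {β : Bool} {s₁ s₂ : Subst} {N : Tm} {a : ℕ} :
      StepSub β s₁ s₂ → StepSub β (.cons s₁ N a) (.cons s₂ N a)
  | consR {β : Bool} {s : Subst} {N₁ N₂ : Tm} {a : ℕ} :
      StepTm β N₁ N₂ → StepSub β (.cons s N₁ a) (.cons s N₂ a)
  | compL {β : Bool} {s₁ s₂ q : Subst} :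
      StepSub β s₁ s₂ → StepSub β (.comp s₁ q) (.comp s₂ q)
  | compR {β : Bool} {s q₁ q₂ : Subst} :
      StepSub β q₁ q₂ → StepSub β (.comp s q₁) (.comp s q₂)
end

/-- One-step reduction `⇝` on judgements `Γ ⊢ M`, including the rule `α₂`.
`StepJ true` is λπ, `StepJ false` is σπα. -/
inductive StepJ (β : Bool) : List ℕ × Tm → List ℕ × Tm → Prop
  | step {Γ : List ℕ} {M₁ M₂ : Tm} : StepTm β M₁ M₂ → StepJ β (Γ, M₁) (Γ, M₂)
  | alpha2 {Γ Δ : List ℕ} {a b : ℕ} {M : Tm} :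
      (∃ i, a ∈ FVJ (Δ ++ [a]) M i) → (∀ i, b ∉ FVJ (Δ ++ [a]) M i) →
      StepJ β (Δ ++ a :: Γ, M)
        (Δ ++ b :: Γ, .clos (Uparrow Δ (.cons (.pi b) (.var b) a)) M)

/- Name-free (de Bruijn) terms and substitutions. -/
mutual
inductive NTm : Type
  | one : NTm
  | app : NTm → NTm → NTm
  | lam : NTm → NTm
  | clos : NSub → NTm → NTm
inductive NSub : Type
  | id : NSub
  | pi : NSub
  | cons : NSub → NTm → NSub
  | comp : NSub → NSub → NSub
end

/-- `piIter n` is the left-nested composition of `n+1` copies of `π`. -/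
def piIter : ℕ → NSub
  | 0 => .pi
  | k + 1 => .comp (piIter k) .pi

/-- `dbr n` is the de Bruijn index `n+1̲`: `dbr 0 = 1` and
`dbr (n+1) = ((…(π∘π)∘…)∘π)∘1` with `n+1` occurrences of `π`. -/
def dbr : ℕ → NTm
  | 0 => .one
  | n + 1 => .clos (piIter n) .one

/- One-step reduction of λσ (`NStepTm true`) resp. σ (`NStepTm false`)
on name-free terms/substitutions. -/
mutual
inductive NStepTm : Bool → NTm → NTm → Prop
  | beta {U V : NTm} : NStepTm true (.app (.lam U) V) (.clos (.cons .id V) U)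
  | abs {β : Bool} {u : NSub} {U : NTm} :
      NStepTm β (.clos u (.lam U)) (.lam (.clos (.cons (.comp .pi u) .one) U))
  | app {β : Bool} {u : NSub} {U V : NTm} :
      NStepTm β (.clos u (.app U V)) (.app (.clos u U) (.clos u V))
  | consVar {β : Bool} {u : NSub} {V : NTm} : NStepTm β (.clos (.cons u V) .one) V
  | idVar {β : Bool} : NStepTm β (.clos .id .one) .one
  | clos {β : Bool} {u v : NSub} {U : NTm} :
      NStepTm β (.clos u (.clos v U)) (.clos (.comp u v) U)
  | lamCong {β : Bool} {U₁ U₂ : NTm} : NStepTm β U₁ U₂ → NStepTm β (.lam U₁) (.lam U₂)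
  | appL {β : Bool} {U₁ U₂ V : NTm} : NStepTm β U₁ U₂ → NStepTm β (.app U₁ V) (.app U₂ V)
  | appR {β : Bool} {U V₁ V₂ : NTm} : NStepTm β V₁ V₂ → NStepTm β (.app U V₁) (.app U V₂)
  | closL {β : Bool} {u₁ u₂ : NSub} {U : NTm} :
      NStepSub β u₁ u₂ → NStepTm β (.clos u₁ U) (.clos u₂ U)
  | closR {β : Bool} {u : NSub} {U₁ U₂ : NTm} :
      NStepTm β U₁ U₂ → NStepTm β (.clos u U₁) (.clos u U₂)
inductive NStepSub : Bool → NSub → NSub → Prop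
  | ass {β : Bool} {u v w : NSub} : NStepSub β (.comp u (.comp v w)) (.comp (.comp u v) w)
  | idR {β : Bool} {u : NSub} : NStepSub β (.comp u .id) u
  | idShift {β : Bool} : NStepSub β (.comp .id .pi) .pi
  | consShift {β : Bool} {u : NSub} {V : NTm} : NStepSub β (.comp (.cons u V) .pi) u
  | map {β : Bool} {u v : NSub} {V : NTm} :
      NStepSub β (.comp u (.cons v V)) (.cons (.comp u v) (.clos u V))
  | consL {β : Bool} {u₁ u₂ : NSub} {V : NTm} :
      NStepSub β u₁ u₂ → NStepSub β (.cons u₁ V) (.cons u₂ V)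
  | consR {β : Bool} {u : NSub} {V₁ V₂ : NTm} :
      NStepTm β V₁ V₂ → NStepSub β (.cons u V₁) (.cons u V₂)
  | compL {β : Bool} {u₁ u₂ v : NSub} :
      NStepSub β u₁ u₂ → NStepSub β (.comp u₁ v) (.comp u₂ v)
  | compR {β : Bool} {u v₁ v₂ : NSub} :
      NStepSub β v₁ v₂ → NStepSub β (.comp u v₁) (.comp u v₂)
end

/- The correspondence `(Γ ⊢ M) ⟹ U` resp. `(Γ ⊢ s ▷ Δ) ⟹ u` between judgements and
name-free terms/substitutions (Definition 7.6 of the paper). -/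
mutual
inductive TrTm : List ℕ → Tm → NTm → Prop
  | var (Γ : List ℕ) (a : ℕ) : TrTm (a :: Γ) (.var a) (dbr 0)
  | weak {Γ : List ℕ} {a : ℕ} {n : ℕ} (b : ℕ) : a ≠ b →
      TrTm Γ (.var a) (dbr n) → TrTm (b :: Γ) (.var a) (dbr (n + 1))
  | app {Γ M N U V} : TrTm Γ M U → TrTm Γ N V → TrTm Γ (.app M N) (.app U V)
  | lam {Γ a M U} : TrTm (a :: Γ) M U → TrTm Γ (.lam a M) (.lam U)
  | clos {Γ s Δ M u U} : TrSub Γ s Δ u → TrTm Δ M U → TrTm Γ (.clos s M) (.clos u U)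
inductive TrSub : List ℕ → Subst → List ℕ → NSub → Prop
  | id (Γ) : TrSub Γ .id Γ .id
  | pi (Γ a) : TrSub (a :: Γ) (.pi a) Γ .pi
  | cons {Γ s Δ N u V} (a) : TrSub Γ s Δ u → TrTm Γ N V →
      TrSub Γ (.cons s N a) (a :: Δ) (.cons u V)
  | comp {Γ s Δ q Θ u v} : TrSub Γ s Δ u → TrSub Δ q Θ v →
      TrSub Γ (.comp s q) Θ (.comp u v)
end

/-- Left-nested compositions `(…((π_{a₁}∘π_{a₂})∘…)∘π_{a_n}` with `n ≥ 1`. -/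
inductive IsPiComp : Subst → Prop
  | single (a : ℕ) : IsPiComp (.pi a)
  | comp {s : Subst} (a : ℕ) : IsPiComp s → IsPiComp (.comp s (.pi a))

/-- Substitutions of the form `⟨r, N₁\b₁, …, N_k\b_k⟩` with `k ≥ 1`, where `r` is `id`
or a left-nested composition of `π`'s. -/
inductive IsConsChain : Subst → Prop
  | base {s : Subst} {N : Tm} {b : ℕ} : (s = Subst.id ∨ IsPiComp s) →
      IsConsChain (.cons s N b)
  | cons {s : Subst} {N : Tm} {b : ℕ} : IsConsChain s → IsConsChain (.cons s N b)

/-- The four shapes (i)–(iv) of σπα-normal substitutions. -/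
def NFShape (s : Subst) : Prop := s = Subst.id ∨ IsPiComp s ∨ IsConsChain s

/-- A term is pure iff it contains no subterm of the shape `s∘N`. -/
def PureTm : Tm → Prop
  | .var _ => True
  | .app M N => PureTm M ∧ PureTm N
  | .lam _ M => PureTm M
  | .clos _ _ => False

/-- `PiChainEnd s b`: `s` is a left-nested composition of `π`'s whose rightmost factor
is `π_b`, i.e. `s = ((…(π_{a₁}∘…)∘π_{a_m})∘π_b` with `m ≥ 0`. -/
inductive PiChainEnd : Subst → ℕ → Prop
  | single (b : ℕ) : PiChainEnd (.pi b) b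
  | comp {s : Subst} (b : ℕ) : IsPiComp s → PiChainEnd (.comp s (.pi b)) b

/-- Terms constructed from variables and blocks `((…((π_{a₁}∘π_{a₂})∘…)∘π_b)∘b`
(with `m ≥ 0` factors before `π_b`) using application and abstraction only. -/
inductive FromBlocks : Tm → Prop
  | var (a : ℕ) : FromBlocks (.var a)
  | block {s : Subst} {b : ℕ} : PiChainEnd s b → FromBlocks (.clos s (.var b))
  | app {M N : Tm} : FromBlocks M → FromBlocks N → FromBlocks (.app M N)
  | lam {M : Tm} (a : ℕ) : FromBlocks M → FromBlocks (.lam a M)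

/- The compatible closure of the single rule α₁ on terms and substitutions. -/
mutual
inductive A1Tm : Tm → Tm → Prop
  | alpha1 {a b : ℕ} {M : Tm} :
      (∃ i, a ∈ FV (.lam a M) i) → (∀ i, b ∉ FV (.lam a M) i) →
      A1Tm (.lam a M) (.lam b (.clos (.cons (.pi b) (.var b) a) M))
  | lamCong {a : ℕ} {M₁ M₂ : Tm} : A1Tm M₁ M₂ → A1Tm (.lam a M₁) (.lam a M₂)
  | appL {M₁ M₂ N : Tm} : A1Tm M₁ M₂ → A1Tm (.app M₁ N) (.app M₂ N)
  | appR {M N₁ N₂ : Tm} : A1Tm N₁ N₂ → A1Tm (.app M N₁) (.app M N₂)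
  | closL {s₁ s₂ : Subst} {M : Tm} : A1Sub s₁ s₂ → A1Tm (.clos s₁ M) (.clos s₂ M)
  | closR {s : Subst} {M₁ M₂ : Tm} : A1Tm M₁ M₂ → A1Tm (.clos s M₁) (.clos s M₂)
inductive A1Sub : Subst → Subst → Prop
  | consL {s₁ s₂ : Subst} {N : Tm} {a : ℕ} : A1Sub s₁ s₂ → A1Sub (.cons s₁ N a) (.cons s₂ N a)
  | consR {s : Subst} {N₁ N₂ : Tm} {a : ℕ} : A1Tm N₁ N₂ → A1Sub (.cons s N₁ a) (.cons s N₂ a)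
  | compL {s₁ s₂ q : Subst} : A1Sub s₁ s₂ → A1Sub (.comp s₁ q) (.comp s₂ q)
  | compR {s q₁ q₂ : Subst} : A1Sub q₁ q₂ → A1Sub (.comp s q₁) (.comp s q₂)
end


def OlamL : List ℕ → (ℕ → Finset ℕ) → ℕ → Finset ℕ
  | [], A => A
  | a :: Γ, A => OlamL Γ (Olam a A)

theorem FV_lamCtx (Γ : List ℕ) : ∀ M : Tm, FV (lamCtx Γ M) = OlamL Γ (FV M) := by
  induction Γ with
  | nil => intro M; rfl
  | cons a Γ ih => intro M; simp only [lamCtx, ih, OlamL, FV]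

theorem Olam_mono (a : ℕ) {A B : ℕ → Finset ℕ} (h : ∀ i, A i ⊆ B i) :
    ∀ i, Olam a A i ⊆ Olam a B i := by
  intro i
  cases i with
  | zero => exact Finset.union_subset_union (Finset.erase_subset_erase a (h 0)) (h 1)
  | succ n => exact h _

theorem OlamL_mono (Γ : List ℕ) : ∀ {A B : ℕ → Finset ℕ}, (∀ i, A i ⊆ B i) →
    ∀ i, OlamL Γ A i ⊆ OlamL Γ B i := by
  induction Γ with
  | nil => intro A B h; exact h
  | cons a Γ ih => intro A B h; exact ih (Olam_mono a h)

theorem OlamL_append (Γ Δ : List ℕ) : ∀ A, OlamL (Γ ++ Δ) A = OlamL Δ (OlamL Γ A) := by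
  induction Γ with
  | nil => intro A; rfl
  | cons a Γ ih => intro A; exact ih _

theorem Olam_Opi (a : ℕ) (A : ℕ → Finset ℕ) : Olam a (Opi A) = A := by
  funext i
  cases i <;> simp [Olam, Opi]

theorem pi_chain {s : Subst} (hs : IsPiComp s) : ∀ {Γ Θ : List ℕ}, WfSub Γ s Θ →
    ∃ Δ, Γ = Δ ++ Θ ∧ ∀ A, OlamL Δ (Osub s A) = A := by
  induction hs with
  | single a =>
    intro Γ Θ h
    cases h
    exact ⟨[a], rfl, fun A => by simp [OlamL, Osub, Olam_Opi]⟩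
  | comp a hs ih =>
    intro Γ Θ h
    cases h with
    | comp h1 h2 =>
      cases h2
      obtain ⟨Δ, rfl, hA⟩ := ih h1
      refine ⟨Δ ++ [a], by simp, fun A => ?_⟩
      rw [OlamL_append]
      simp [OlamL, Osub, hA, Olam_Opi]

theorem pi_end {s : Subst} {b : ℕ} (hs : PiChainEnd s b) {Γ Θ : List ℕ} (h : WfSub Γ s Θ) :
    ∃ Δ, Γ = Δ ++ b :: Θ ∧ ∀ A, OlamL (Δ ++ [b]) (Osub s A) = A := by
  cases hs with
  | single =>
    cases h
    exact ⟨[], rfl, fun A => by simp [OlamL, Osub, Olam_Opi]⟩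
  | comp _ hs =>
    cases h with
    | comp h1 h2 =>
      cases h2
      obtain ⟨Δ, rfl, hA⟩ := pi_chain hs h1
      refine ⟨Δ, rfl, fun A => ?_⟩
      rw [OlamL_append]
      simp [OlamL, Osub, hA, Olam_Opi]

theorem Opi_bd {A : ℕ → Finset ℕ} {B : ℕ} (h : ∀ i, ∀ x ∈ A i, x < B) :
    ∀ i, ∀ x ∈ Opi A i, x < B := by
  intro i x hx
  cases i with
  | zero => simp [Opi] at hx
  | succ n => exact h n x hx

theorem Osub_bd {s : Subst} (hs : IsPiComp s) : ∀ {A : ℕ → Finset ℕ} {B : ℕ},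
    (∀ i, ∀ x ∈ A i, x < B) → ∀ i, ∀ x ∈ Osub s A i, x < B := by
  induction hs with
  | single a => intro A B h; simpa [Osub] using Opi_bd h
  | comp a hs ih =>
    intro A B h
    have := ih (Opi_bd h)
    simpa [Osub] using this

theorem fv_bd {M : Tm} (h : FromBlocks M) : ∃ B, ∀ i, ∀ x ∈ FV M i, x < B := by
  induction h with
  | var a =>
    refine ⟨a + 1, fun i x hx => ?_⟩
    simp only [FV] at hx
    split_ifs at hx <;> simp at hx
    omega
  | @block s b hs =>
    have hs' : IsPiComp s := by
      cases hs with
      | single => exact .single _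
      | comp _ h => exact .comp _ h
    refine ⟨b + 1, ?_⟩
    simp only [FV]
    refine Osub_bd hs' (fun i x hx => ?_)
    split_ifs at hx <;> simp at hx
    omega
  | app _ _ ih1 ih2 =>
    obtain ⟨B1, h1⟩ := ih1
    obtain ⟨B2, h2⟩ := ih2
    refine ⟨max B1 B2, fun i x hx => ?_⟩
    simp only [FV, Finset.mem_union] at hx
    rcases hx with hx | hx
    · exact lt_max_of_lt_left (h1 i x hx)
    · exact lt_max_of_lt_right (h2 i x hx)
  | lam a _ ih =>
    obtain ⟨B, h⟩ := ih
    refine ⟨B, fun i x hx => ?_⟩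
    simp only [FV] at hx
    cases i with
    | zero =>
      simp only [Olam, Finset.mem_union, Finset.mem_erase] at hx
      rcases hx with hx | hx
      · exact h 0 x hx.2
      · exact h 1 x hx
    | succ n => exact h _ x hx

theorem fromBlocks_lamCtx (Γ : List ℕ) : ∀ {M : Tm}, FromBlocks M → FromBlocks (lamCtx Γ M) := by
  induction Γ with
  | nil => intro M h; exact h
  | cons a Γ ih => intro M h; exact ih (.lam a h)

theorem fresh {M : Tm} (h : FromBlocks M) : ∃ b, ∀ i, b ∉ FV M i := by
  obtain ⟨B, hB⟩ := fv_bd h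
  exact ⟨B, fun i hi => lt_irrefl _ (hB i B hi)⟩

theorem blocks_aux {M : Tm} (hfb : FromBlocks M) : ∀ {Γ : List ℕ}, WfTm Γ M →
    PureTm M ∨ (∃ M' : Tm, A1Tm M M') ∨
      (∃ (Γ₀ Δ : List ℕ) (a : ℕ), Γ = Δ ++ a :: Γ₀ ∧ ∃ i, a ∈ FVJ (Δ ++ [a]) M i) := by
  induction hfb with
  | var a => intro Γ _; exact Or.inl trivial
  | @block s b hs =>
    intro Γ h
    cases h with
    | clos h1 h2 =>
      obtain ⟨Δ, hΓ, hA⟩ := pi_end hs h1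
      refine Or.inr (Or.inr ⟨_, Δ, b, hΓ, 0, ?_⟩)
      rw [FVJ, FV_lamCtx]
      simp only [FV]
      rw [hA]
      simp
  | @app M N _ _ ih1 ih2 =>
    intro Γ h
    cases h with
    | app h1 h2 =>
      rcases ih1 h1 with p1 | ⟨M', h⟩ | ⟨Γ₀, Δ, a, hΓ, i, hi⟩
      · rcases ih2 h2 with p2 | ⟨M', h⟩ | ⟨Γ₀, Δ, a, hΓ, i, hi⟩
        · exact Or.inl ⟨p1, p2⟩
        · exact Or.inr (Or.inl ⟨_, .appR h⟩)
        · refine Or.inr (Or.inr ⟨Γ₀, Δ, a, hΓ, i, ?_⟩)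
          rw [FVJ, FV_lamCtx] at hi ⊢
          refine OlamL_mono _ (fun j => ?_) i hi
          simp only [FV]
          exact Finset.subset_union_right
      · exact Or.inr (Or.inl ⟨_, .appL h⟩)
      · refine Or.inr (Or.inr ⟨Γ₀, Δ, a, hΓ, i, ?_⟩)
        rw [FVJ, FV_lamCtx] at hi ⊢
        refine OlamL_mono _ (fun j => ?_) i hi
        simp only [FV]
        exact Finset.subset_union_left
  | @lam M a hM ih =>
    intro Γ h
    cases h with
    | lam h =>
      rcases ih h with p | ⟨M', h⟩ | ⟨Γ₀, Δ, c, hΓ, i, hi⟩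
      · exact Or.inl p
      · exact Or.inr (Or.inl ⟨_, .lamCong h⟩)
      · cases Δ with
        | nil =>
          simp only [List.nil_append, List.cons.injEq] at hΓ
          obtain ⟨rfl, rfl⟩ := hΓ
          obtain ⟨b, hb⟩ := fresh (FromBlocks.lam a hM)
          exact Or.inr (Or.inl ⟨_, .alpha1 ⟨i, hi⟩ hb⟩)
        | cons d Δ =>
          simp only [List.cons_append, List.cons.injEq] at hΓ
          obtain ⟨rfl, rfl⟩ := hΓ
          exact Or.inr (Or.inr ⟨Γ₀, Δ, c, rfl, i, hi⟩)

/-- a derivable term built from variables and π-blocks by application and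
abstraction is pure, or α₁ applies to the term, or α₂ applies to the judgement. -/
theorem blocks_pure_or_alpha {Γ : List ℕ} {M : Tm}
    (h : WfTm Γ M) (hfb : FromBlocks M) :
    PureTm M ∨ (∃ M' : Tm, A1Tm M M') ∨
      (∃ (Γ₀ Δ : List ℕ) (a b : ℕ), Γ = Δ ++ a :: Γ₀ ∧
        (∃ i, a ∈ FVJ (Δ ++ [a]) M i) ∧ (∀ i, b ∉ FVJ (Δ ++ [a]) M i)) := by
  rcases blocks_aux hfb h with p | p | ⟨Γ₀, Δ, a, hΓ, hi⟩
  · exact Or.inl p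
  · exact Or.inr (Or.inl p)
  · obtain ⟨b, hb⟩ := fresh (fromBlocks_lamCtx (Δ ++ [a]) hfb)
    exact Or.inr (Or.inr ⟨Γ₀, Δ, a, b, hΓ, hi, hb⟩)
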